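/- Let $S \in [0,1]^{m \times n}$ be a scoring matrix with $m \ge 2$, for each method $i \in [m]$ let $\mu_i = \frac{1}{n}\sum_{j=1}^n S_{ij}$, and suppose there is a unique best method $i^* = \arg\max_i \mu_i$. Define the hardness quantity $H_1 = \sum_{i=1, i \neq i^*}^m \frac{1}{(\mu_i - \mu_{i^*})^2}$. Run the UCB-E algorithm with total evaluation budget $T$ (with $m \le T \le mn$) and exploration parameter $a = \frac{25}{36}\cdot\frac{T-m}{H_1}$. Then the probability that the algorithm returns $i^*$ is at least $1 - 2\,T\,m\,\exp\!\left(-\frac{T-m}{18 H_1}\right)$. -/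

import Mathlib

open scoped Classical BigOperators

noncomputable section UCBE

variable {m n : ℕ}

/-- Number of observed entries in row `i` of the observation matrix `O`. -/
def obsCount (O : Fin m → Fin n → Bool) (i : Fin m) : ℕ :=
  (Finset.univ.filter fun j => O i j = true).card

/-- Sum of the observed scores of method `i`. -/
def obsSum (S : Fin m → Fin n → ℝ) (O : Fin m → Fin n → Bool) (i : Fin m) : ℝ :=
  ∑ j ∈ Finset.univ.filter (fun j => O i j = true), S i j

/-- Empirical mean score of method `i` over the observed entries. -/
def empMean (S : Fin m → Fin n → ℝ) (O : Fin m → Fin n → Bool) (i : Fin m) : ℝ :=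
  obsSum S O i / (obsCount O i : ℝ)

/-- Upper confidence bound of method `i`; `+∞` when method `i` has no observations. -/
def ucb (S : Fin m → Fin n → ℝ) (a : ℝ) (O : Fin m → Fin n → Bool) (i : Fin m) : EReal :=
  if obsCount O i = 0 then ⊤
  else ((empMean S O i + Real.sqrt (a / (obsCount O i : ℝ)) : ℝ) : EReal)

/-- Methods that still have unobserved entries. -/
def candidates (O : Fin m → Fin n → Bool) : Finset (Fin m) :=
  Finset.univ.filter fun i => ∃ j, O i j = false

/-- Among the methods that still have unobserved entries, those maximizing the UCB. -/
def bestArms (S : Fin m → Fin n → ℝ) (a : ℝ) (O : Fin m → Fin n → Bool) : Finset (Fin m) :=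
  (candidates O).filter fun i => ∀ k ∈ candidates O, ucb S a O k ≤ ucb S a O i

/-- Reveal entry `(i, j)` of the observation matrix. -/
def reveal (O : Fin m → Fin n → Bool) (i : Fin m) (j : Fin n) : Fin m → Fin n → Bool :=
  fun i' j' => if i' = i ∧ j' = j then true else O i' j'

/-- One step of the UCB-E algorithm: pick a method with maximal UCB uniformly at random
(among methods with unobserved entries), then pick one of its unobserved examples
uniformly at random and reveal it. -/
def ucbeStep (S : Fin m → Fin n → ℝ) (a : ℝ) (O : Fin m → Fin n → Bool) :
    PMF (Fin m → Fin n → Bool) :=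
  if h : (bestArms S a O).Nonempty then
    (PMF.uniformOfFinset _ h).bind fun i =>
      if h2 : (Finset.univ.filter fun j => O i j = false).Nonempty then
        (PMF.uniformOfFinset _ h2).map fun j => reveal O i j
      else PMF.pure O
  else PMF.pure O

/-- The distribution over observation matrices after `t` steps of UCB-E, starting from the
all-zero observation matrix. -/
def ucbeRun (S : Fin m → Fin n → ℝ) (a : ℝ) : ℕ → PMF (Fin m → Fin n → Bool)
  | 0 => PMF.pure fun _ _ => false
  | t + 1 => (ucbeRun S a t).bind (ucbeStep S a)

/-- Output of the UCB-E algorithm with budget `T`: run `T` steps and return a method with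
maximal empirical mean (ties broken uniformly at random). -/
def ucbeOutput (hm : 0 < m) (S : Fin m → Fin n → ℝ) (a : ℝ) (T : ℕ) : PMF (Fin m) :=
  (ucbeRun S a T).bind fun O =>
    PMF.uniformOfFinset
      (Finset.univ.filter fun i => ∀ k, empMean S O k ≤ empMean S O i)
      (by
        haveI : Nonempty (Fin m) := ⟨⟨0, hm⟩⟩
        obtain ⟨b, -, hb⟩ :=
          Finset.exists_max_image (Finset.univ : Finset (Fin m)) (empMean S O)
            Finset.univ_nonempty
        exact ⟨b, Finset.mem_filter.2 ⟨Finset.mem_univ b, fun k => hb k (Finset.mem_univ k)⟩⟩)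

end UCBE

/-!
Call the run good as long as every empirical mean is within a fifth of its exploration bonus. While
this holds, an arm is pulled only if its true mean plus `6 / 5` of its bonus beats the true mean
plus `4 / 5` of the bonus of every other unexhausted arm. This is a condition on the pull counts
alone. At time `T`, the excess `T - m ≥ (36 / 25) a H₁` of pulls then forces the estimation errors
of the best arm and of any rival to add up to less than their gap; the empirical mean of an
exhausted arm is exact.

Each row is sampled uniformly without replacement, however the algorithm interleaves the rows.
Hence, for fixed `i` and `s`, the conditional probability that the first `s` samples of row `i` have
a deviating mean is a supermartingale along the run. Hoeffding's inequality for sampling without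
replacement bounds its initial value by `2 exp (- 2 a / 25)`: the exponential moment is at most the
one for drawing with replacement, by the tangent-line inequality
`𝔼 j, x j * (mean of the others) ^ k ≤ (mean of x) ^ (k + 1)`. A maximal inequality for the sum of
these supermartingales over `i` and `s` bounds the probability that the run is not good.
-/

section MarkovChain

open MeasureTheory

lemma toMeasure_le_bind_apply {α β : Type*} [MeasurableSpace α] {p : PMF α} {q : α → PMF β}
    {s : Set α} {c : β} (hs : MeasurableSet s) (h : ∀ x ∈ p.support, x ∈ s → q x c = 1) :
    p.toMeasure s ≤ (p.bind q) c := by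
  rw [PMF.toMeasure_apply _ hs, PMF.bind_apply]
  refine ENNReal.tsum_le_tsum fun x => Set.indicator_apply_le' (fun hxs => ?_) fun _ => zero_le
  by_cases hx : p x = 0
  · simp [hx]
  · rw [h x hx hxs, mul_one]

lemma uniformOfFinset_apply_eq_one {α : Type*} {s : Finset α} {hs : s.Nonempty} {b : α}
    (h : ∀ x ∈ s, x = b) : PMF.uniformOfFinset s hs b = 1 := by
  obtain rfl := Finset.eq_singleton_iff_nonempty_unique_mem.2 ⟨hs, h⟩
  simp

variable {α β : Type*} [Finite α] [MeasurableSpace α] [MeasurableSingletonClass α]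
  [Finite β] [MeasurableSpace β] [MeasurableSingletonClass β]

lemma integral_toMeasure_mono {p : PMF α} {f g : α → ℝ} (h : ∀ x ∈ p.support, f x ≤ g x) :
    ∫ x, f x ∂p.toMeasure ≤ ∫ x, g x ∂p.toMeasure := by
  cases nonempty_fintype α
  simp only [PMF.integral_eq_sum, smul_eq_mul]
  refine Finset.sum_le_sum fun x _ => ?_
  by_cases hx : p x = 0
  · simp [hx]
  · exact mul_le_mul_of_nonneg_left (h x hx) ENNReal.toReal_nonneg

lemma integral_toMeasure_le {p : PMF α} {f : α → ℝ} {c : ℝ} (h : ∀ x ∈ p.support, f x ≤ c) :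
    ∫ x, f x ∂p.toMeasure ≤ c := by
  simpa using integral_toMeasure_mono h

lemma integral_toMeasure_bind (p : PMF α) (q : α → PMF β) (f : β → ℝ) :
    ∫ y, f y ∂(p.bind q).toMeasure = ∫ x, ∫ y, f y ∂(q x).toMeasure ∂p.toMeasure := by
  cases nonempty_fintype α
  cases nonempty_fintype β
  have htop (x : α) (y : β) : p x * q x y ≠ ⊤ :=
    ENNReal.mul_ne_top (p.apply_ne_top x) ((q x).apply_ne_top y)
  simp only [PMF.integral_eq_sum, PMF.bind_apply, tsum_fintype,
    ENNReal.toReal_sum fun x _ => htop x _, ENNReal.toReal_mul, smul_eq_mul, Finset.sum_mul,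
    Finset.mul_sum, mul_assoc]
  exact Finset.sum_comm

lemma integral_toMeasure_uniformOfFinset {s : Finset α} (hs : s.Nonempty) (f : α → ℝ) :
    ∫ x, f x ∂(PMF.uniformOfFinset s hs).toMeasure = 𝔼 x ∈ s, f x := by
  cases nonempty_fintype α
  simp [PMF.integral_eq_sum, PMF.uniformOfFinset_apply, apply_ite ENNReal.toReal, ite_mul,
    Finset.sum_ite_mem, ← Finset.mul_sum, Finset.expect_eq_sum_div_card, div_eq_inv_mul]

/-- Setting `min 1 X` to `1` from the first failure of `G` on keeps it a supermartingale. -/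
theorem measureReal_not_invariant_le {κ : α → PMF α} {p : ℕ → PMF α} {x₀ : α}
    (hzero : p 0 = PMF.pure x₀) (hsucc : ∀ t, p (t + 1) = (p t).bind κ)
    {X : α → ℝ} (hX₀ : ∀ x, 0 ≤ X x) (hX : ∀ x, ∫ y, X y ∂(κ x).toMeasure ≤ X x)
    {G : α → Prop} (hG₀ : G x₀) {T : ℕ}
    (hG : ∀ t < T, ∀ x ∈ (p t).support, G x → ∀ y ∈ (κ x).support, X y < 1 → G y) :
    (p T).toMeasure.real {x | ¬ G x} ≤ X x₀ := by
  classical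
  set Φ : α → ℝ := fun x => if G x then min 1 (X x) else 1 with hΦ
  have hΦ_le_one (x : α) : Φ x ≤ 1 := by
    simp only [hΦ]; split_ifs <;> simp
  have hstep : ∀ t < T, ∀ x ∈ (p t).support, ∫ y, Φ y ∂(κ x).toMeasure ≤ Φ x := by
    intro t ht x hx
    have hone : ∫ y, Φ y ∂(κ x).toMeasure ≤ 1 := integral_toMeasure_le fun y _ => hΦ_le_one y
    by_cases hGx : G x
    · have hle : ∀ y ∈ (κ x).support, Φ y ≤ X y := fun y hy => by
        by_cases hGy : G y
        · simp [hΦ, hGy]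
        · simpa [hΦ, hGy] using mt (hG t ht x hx hGx y hy) hGy
      rw [show Φ x = min 1 (X x) from if_pos hGx]
      exact le_min hone ((integral_toMeasure_mono hle).trans (hX x))
    · rwa [show Φ x = 1 from if_neg hGx]
  have hrun : ∀ t ≤ T, ∫ x, Φ x ∂(p t).toMeasure ≤ X x₀ := by
    intro t
    induction t with
    | zero => intro _; simp [hzero, PMF.toMeasure_pure, hΦ, hG₀]
    | succ t ih =>
      intro ht
      rw [hsucc, integral_toMeasure_bind]
      exact (integral_toMeasure_mono (hstep t ht)).trans (ih (by lia))
  calc (p T).toMeasure.real {x | ¬ G x}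
      = ∫ x, {x | ¬ G x}.indicator 1 x ∂(p T).toMeasure :=
        (integral_indicator_one (Set.toFinite _).measurableSet).symm
    _ ≤ ∫ x, Φ x ∂(p T).toMeasure := integral_toMeasure_mono fun x _ => by
        by_cases hGx : G x <;> simp [hΦ, hGx, hX₀]
    _ ≤ X x₀ := hrun T le_rfl

end MarkovChain

section SamplingWithoutReplacement

variable {ι : Type*}

/-- The right-hand side is the tangent at `y = M` of the left-hand side. -/
lemma add_mul_sub_mul_pow_le {M y d : ℝ} (hM : 0 ≤ M) (hy : 0 ≤ y) {k : ℕ} (hk : k ≤ d) :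
    (M + d * (M - y)) * y ^ k ≤ M ^ k * (M + (d - k) * (M - y)) := by
  induction k with
  | zero => simp
  | succ k ih =>
    push_cast at hk ⊢
    have hgap : 0 ≤ M ^ k * ((d - k - 1) * (M - y) ^ 2) + M ^ k * (M - y) ^ 2 := by
      have : 0 ≤ d - k - 1 := by linarith
      positivity
    calc (M + d * (M - y)) * y ^ (k + 1) = (M + d * (M - y)) * y ^ k * y := by ring
      _ ≤ M ^ k * (M + (d - k) * (M - y)) * y :=
          mul_le_mul_of_nonneg_right (ih (by linarith)) hy
      _ ≤ M ^ (k + 1) * (M + (d - (k + 1)) * (M - y)) := by linear_combination hgap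

lemma expect_mul_expect_erase_pow_le [DecidableEq ι] {s : Finset ι} {x : ι → ℝ}
    (hx : ∀ i ∈ s, 0 ≤ x i) {k : ℕ} (hk : k + 1 ≤ s.card) :
    𝔼 j ∈ s, x j * (𝔼 i ∈ s.erase j, x i) ^ k ≤ (𝔼 i ∈ s, x i) ^ (k + 1) := by
  rcases k.eq_zero_or_pos with rfl | hkpos
  · simp
  set M := 𝔼 i ∈ s, x i with hMdef
  set y : ι → ℝ := fun j => 𝔼 i ∈ s.erase j, x i
  set d : ℝ := s.card - 1
  have hkd : k ≤ d := le_sub_iff_add_le.2 (by exact_mod_cast hk)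
  have hd : 0 < d := (Nat.cast_pos.2 hkpos).trans_le hkd
  have hs : s.Nonempty := Finset.card_pos.1 (by lia)
  have hM : 0 ≤ M := Finset.expect_nonneg hx
  have hxy : ∀ j ∈ s, x j = M + d * (M - y j) := fun j hj => by
    have herase : d * y j = ∑ i ∈ s.erase j, x i := by
      rw [← Finset.card_mul_expect, Finset.card_erase_of_mem hj, Nat.cast_pred hs.card_pos]
    have hsum : s.card * M = ∑ i ∈ s.erase j, x i + x j := by
      rw [Finset.card_mul_expect, Finset.sum_erase_add _ _ hj]
    linear_combination herase - hsum
  have hmean : 𝔼 j ∈ s, (M - y j) = 0 := by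
    have h : M = M + d * 𝔼 j ∈ s, (M - y j) := by
      conv_lhs => rw [hMdef, Finset.expect_congr rfl hxy, Finset.expect_add_distrib,
        Finset.expect_const hs, ← Finset.mul_expect]
    simpa [hd.ne'] using h
  calc 𝔼 j ∈ s, x j * y j ^ k
      ≤ 𝔼 j ∈ s, (M ^ (k + 1) + M ^ k * (d - k) * (M - y j)) := by
        refine Finset.expect_le_expect fun j hj => ?_
        have hy : 0 ≤ y j := Finset.expect_nonneg fun i hi => hx i (Finset.mem_of_mem_erase hi)
        rw [hxy j hj]
        linear_combination add_mul_sub_mul_pow_le hM hy hkd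
    _ = M ^ (k + 1) := by
        rw [Finset.expect_add_distrib, Finset.expect_const hs, ← Finset.mul_expect, hmean,
          mul_zero, add_zero]

variable [Fintype ι]

open MeasureTheory ProbabilityTheory in
lemma expect_exp_mul_sub_expect_le [Nonempty ι] {v : ι → ℝ} {lo hi : ℝ}
    (hv : ∀ j, v j ∈ Set.Icc lo hi) (l : ℝ) :
    𝔼 j, Real.exp (l * (v j - 𝔼 i, v i)) ≤ Real.exp (l ^ 2 * (hi - lo) ^ 2 / 8) := by
  let _ : MeasurableSpace ι := ⊤
  let P : Measure ι := (PMF.uniformOfFinset _ Finset.univ_nonempty).toMeasure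
  have hP (f : ι → ℝ) : ∫ j, f j ∂P = 𝔼 j, f j := integral_toMeasure_uniformOfFinset _ f
  have h := (hasSubgaussianMGF_of_mem_Icc (μ := P) (measurable_of_finite v).aemeasurable
    (.of_forall hv)).mgf_le l
  simp only [mgf, hP, NNReal.coe_pow, NNReal.coe_div, coe_nnnorm, NNReal.coe_ofNat, div_pow,
    Real.norm_eq_abs, sq_abs] at h
  refine h.trans_eq (congrArg Real.exp ?_)
  ring

/-- The samples `B` of size `s` on which the mean of `v` is off by at least `ε`. -/
def deviatingSamples (v : ι → ℝ) (s : ℕ) (ε : ℝ) : Set (Finset ι) :=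
  {B | B.card = s ∧ ε ≤ |𝔼 j ∈ B, v j - 𝔼 j, v j|}

lemma indicator_deviatingSamples_le (v : ι → ℝ) (s : ℕ) (ε : ℝ) {l : ℝ} (hl : 0 ≤ l)
    (B : Finset ι) :
    (deviatingSamples v s ε).indicator 1 B ≤ Real.exp (-(l * (s * ε))) *
      (Real.exp (l * ∑ j ∈ B, (v j - 𝔼 i, v i)) + Real.exp (-l * ∑ j ∈ B, (v j - 𝔼 i, v i))) := by
  refine Set.indicator_apply_le' (fun hB => ?_) fun _ => by positivity
  obtain ⟨rfl, hdev⟩ := hB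
  have hsum : ∑ j ∈ B, (v j - 𝔼 i, v i) = B.card * (𝔼 j ∈ B, v j - 𝔼 j, v j) := by
    rw [Finset.sum_sub_distrib, mul_sub, Finset.card_mul_expect, Finset.sum_const, nsmul_eq_mul]
  have hle : l * (B.card * ε) ≤ |l * ∑ j ∈ B, (v j - 𝔼 i, v i)| := by
    rw [hsum, abs_mul, abs_mul, abs_of_nonneg hl, Nat.abs_cast]
    gcongr
  rw [Pi.one_apply, neg_mul, Real.exp_neg, inv_mul_eq_div, one_le_div (Real.exp_pos _)]
  exact (Real.exp_le_exp.2 hle).trans (Real.exp_abs_le _)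

variable [DecidableEq ι]

/-- The expected value of `F` at the set obtained from `A` by drawing `k` further elements
uniformly without replacement; it is `0` when fewer than `k` elements are left. -/
noncomputable def expectDraw (F : Finset ι → ℝ) : ℕ → Finset ι → ℝ
  | 0, A => F A
  | k + 1, A => 𝔼 j ∈ Aᶜ, expectDraw F k (insert j A)

lemma expectDraw_mono {F G : Finset ι → ℝ} (h : F ≤ G) (k : ℕ) (A : Finset ι) :
    expectDraw F k A ≤ expectDraw G k A := by
  induction k generalizing A with
  | zero => exact h A
  | succ k ih => exact Finset.expect_le_expect fun j _ => ih _

lemma expectDraw_nonneg {F : Finset ι → ℝ} (h : 0 ≤ F) (k : ℕ) (A : Finset ι) :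
    0 ≤ expectDraw F k A := by
  induction k generalizing A with
  | zero => exact h A
  | succ k ih => exact Finset.expect_nonneg fun j _ => ih _

lemma expectDraw_add (F G : Finset ι → ℝ) (k : ℕ) (A : Finset ι) :
    expectDraw (F + G) k A = expectDraw F k A + expectDraw G k A := by
  induction k generalizing A with
  | zero => rfl
  | succ k ih => simp only [expectDraw, ih, Finset.expect_add_distrib]

lemma expectDraw_smul (c : ℝ) (F : Finset ι → ℝ) (k : ℕ) (A : Finset ι) :
    expectDraw (c • F) k A = c * expectDraw F k A := by
  induction k generalizing A with
  | zero => rfl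
  | succ k ih => simp only [expectDraw, ih, Finset.mul_expect]

/-- The right-hand side is the value for drawing with replacement. -/
lemma expectDraw_prod_le {x : ι → ℝ} (hx : 0 ≤ x) {k : ℕ} {A : Finset ι} (hk : k ≤ Aᶜ.card) :
    expectDraw (fun B => ∏ j ∈ B, x j) k A ≤ (∏ j ∈ A, x j) * (𝔼 j ∈ Aᶜ, x j) ^ k := by
  induction k generalizing A with
  | zero => simp [expectDraw]
  | succ k ih =>
    calc expectDraw (fun B => ∏ j ∈ B, x j) (k + 1) A
        ≤ 𝔼 j ∈ Aᶜ, (∏ i ∈ A, x i) * (x j * (𝔼 i ∈ Aᶜ.erase j, x i) ^ k) := by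
          refine Finset.expect_le_expect fun j hj => (ih ?_).trans_eq ?_
          · rw [Finset.compl_insert, Finset.card_erase_of_mem hj]
            lia
          · rw [Finset.prod_insert (Finset.mem_compl.1 hj), Finset.compl_insert]
            ring
      _ = (∏ i ∈ A, x i) * 𝔼 j ∈ Aᶜ, x j * (𝔼 i ∈ Aᶜ.erase j, x i) ^ k :=
          (Finset.mul_expect ..).symm
      _ ≤ (∏ i ∈ A, x i) * (𝔼 j ∈ Aᶜ, x j) ^ (k + 1) :=
          mul_le_mul_of_nonneg_left (expect_mul_expect_erase_pow_le (fun i _ => hx i) hk)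
            (Finset.prod_nonneg fun i _ => hx i)

lemma expectDraw_exp_mul_sum_sub_le [Nonempty ι] {v : ι → ℝ} {lo hi : ℝ}
    (hv : ∀ j, v j ∈ Set.Icc lo hi) (l : ℝ) {s : ℕ} (hs : s ≤ Fintype.card ι) :
    expectDraw (fun B => Real.exp (l * ∑ j ∈ B, (v j - 𝔼 i, v i))) s ∅ ≤
      Real.exp (s * (l ^ 2 * (hi - lo) ^ 2 / 8)) := by
  calc expectDraw (fun B => Real.exp (l * ∑ j ∈ B, (v j - 𝔼 i, v i))) s ∅
      = expectDraw (fun B => ∏ j ∈ B, Real.exp (l * (v j - 𝔼 i, v i))) s ∅ := by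
        simp only [Finset.mul_sum, Real.exp_sum]
    _ ≤ (𝔼 j, Real.exp (l * (v j - 𝔼 i, v i))) ^ s := by
        simpa using expectDraw_prod_le (A := ∅) (fun j => (Real.exp_pos _).le) (by simpa using hs)
    _ ≤ Real.exp (l ^ 2 * (hi - lo) ^ 2 / 8) ^ s :=
        pow_le_pow_left₀ (Finset.expect_nonneg fun j _ => (Real.exp_pos _).le)
          (expect_exp_mul_sub_expect_le hv l) s
    _ = Real.exp (s * (l ^ 2 * (hi - lo) ^ 2 / 8)) := (Real.exp_nat_mul _ _).symm

/-- The conditional probability, given that `A` has been drawn so far, that the sample of size `s`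
has a deviating mean. For `s < A.card` the truncated subtraction makes no further draw, and
`B.card = s` fails. -/
noncomputable def deviationProb (v : ι → ℝ) (s : ℕ) (ε : ℝ) (A : Finset ι) : ℝ :=
  expectDraw ((deviatingSamples v s ε).indicator 1) (s - A.card) A

lemma deviationProb_nonneg (v : ι → ℝ) (s : ℕ) (ε : ℝ) (A : Finset ι) :
    0 ≤ deviationProb v s ε A :=
  expectDraw_nonneg (Set.indicator_nonneg fun _ _ => zero_le_one) _ _

lemma deviationProb_card_eq_one {v : ι → ℝ} {ε : ℝ} {A : Finset ι}
    (h : ε ≤ |𝔼 j ∈ A, v j - 𝔼 j, v j|) : deviationProb v A.card ε A = 1 := by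
  have hA : A ∈ deviatingSamples v A.card ε := ⟨rfl, h⟩
  rw [deviationProb, Nat.sub_self, expectDraw, Set.indicator_of_mem hA, Pi.one_apply]

lemma expect_deviationProb_insert_le (v : ι → ℝ) (s : ℕ) (ε : ℝ) (A : Finset ι) :
    𝔼 j ∈ Aᶜ, deviationProb v s ε (insert j A) ≤ deviationProb v s ε A := by
  have hcard : ∀ j ∈ Aᶜ, (insert j A).card = A.card + 1 := fun j hj =>
    Finset.card_insert_of_notMem (Finset.mem_compl.1 hj)
  rcases lt_or_ge A.card s with hs | hs
  · obtain ⟨k, rfl⟩ := Nat.exists_eq_add_of_lt hs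
    refine le_of_eq ?_
    rw [deviationProb, show A.card + k + 1 - A.card = k + 1 by lia, expectDraw]
    refine Finset.expect_congr rfl fun j hj => ?_
    rw [deviationProb, hcard j hj, show A.card + k + 1 - (A.card + 1) = k by lia]
  · refine (Finset.expect_eq_zero fun j hj => ?_).trans_le (deviationProb_nonneg v s ε A)
    have hne : insert j A ∉ deviatingSamples v s ε := fun h => by
      have := hcard j hj ▸ h.1
      lia
    rw [deviationProb, hcard j hj, Nat.sub_eq_zero_of_le (by lia), expectDraw,
      Set.indicator_of_notMem hne]

theorem deviationProb_empty_le [Nonempty ι] {v : ι → ℝ} {lo hi : ℝ} (hlt : lo < hi)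
    (hv : ∀ j, v j ∈ Set.Icc lo hi) {s : ℕ} (hs : s ≤ Fintype.card ι) {ε : ℝ} (hε : 0 ≤ ε) :
    deviationProb v s ε ∅ ≤ 2 * Real.exp (-(2 * s * ε ^ 2 / (hi - lo) ^ 2)) := by
  set l := 4 * ε / (hi - lo) ^ 2
  have hwidth : 0 < hi - lo := sub_pos.2 hlt
  let E : ℝ → Finset ι → ℝ := fun r B => Real.exp (r * ∑ j ∈ B, (v j - 𝔼 i, v i))
  have hsq (r : ℝ) (hr : r ^ 2 = l ^ 2) :
      expectDraw (E r) s ∅ ≤ Real.exp (s * (l ^ 2 * (hi - lo) ^ 2 / 8)) :=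
    hr ▸ expectDraw_exp_mul_sum_sub_le hv r hs
  calc deviationProb v s ε ∅
      ≤ Real.exp (-(l * (s * ε))) * (expectDraw (E l) s ∅ + expectDraw (E (-l)) s ∅) := by
        rw [← expectDraw_add, ← expectDraw_smul]
        exact expectDraw_mono (indicator_deviatingSamples_le v s ε (by positivity)) _ _
    _ ≤ Real.exp (-(l * (s * ε))) * (2 * Real.exp (s * (l ^ 2 * (hi - lo) ^ 2 / 8))) := by
        gcongr
        linarith [hsq l rfl, hsq (-l) (neg_sq l)]
    _ = 2 * Real.exp (-(2 * s * ε ^ 2 / (hi - lo) ^ 2)) := by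
        rw [mul_left_comm, ← Real.exp_add]
        congr 2
        simp only [l]
        field_simp
        ring

end SamplingWithoutReplacement

section PullCounts

variable {ι : Type*} {μ : ι → ℝ} {a : ℝ} {n : ℕ} {c : ι → ℕ} {i j k best : ι}

/-- `c` records how often each arm has been pulled, at most `n` times each. Every repeated pull of
an arm `j` happened while its upper confidence bound was the largest: if all empirical means are
within `√(a / c) / 5` of the means `μ`, this gives the stated comparison with the arms `i` that are
not exhausted. The count of `j` before its last pull was `c j - 1`. -/
def PullsJustified (μ : ι → ℝ) (a : ℝ) (n : ℕ) (c : ι → ℕ) : Prop :=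
  ∀ ⦃i j⦄, i ≠ j → c i < n → 2 ≤ c j →
    c i ≠ 0 ∧ μ i + 4 / 5 * √(a / c i) ≤ μ j + 6 / 5 * √(a / (c j - 1 : ℝ))

lemma pullsJustified_zero : PullsJustified μ a n 0 := by
  rintro i j - - ⟨⟩

lemma PullsJustified.update [DecidableEq ι] (hc : PullsJustified μ a n c) (ha : 0 ≤ a)
    (hk : ∀ i ≠ k, c i < n → c k ≠ 0 →
      c i ≠ 0 ∧ μ i + 4 / 5 * √(a / c i) ≤ μ k + 6 / 5 * √(a / c k)) :
    PullsJustified μ a n (Function.update c k (c k + 1)) := by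
  intro i j hij hin hj
  rcases eq_or_ne j k with rfl | hjk
  · simp only [Function.update_self, Function.update_of_ne hij] at *
    simpa using hk i hij hin (by lia)
  rw [Function.update_of_ne hjk] at hj ⊢
  rcases eq_or_ne i k with rfl | hik
  · simp only [Function.update_self] at *
    obtain ⟨hpos, hle⟩ := hc hij (by lia) hj
    refine ⟨by lia, le_trans ?_ hle⟩
    gcongr
    lia
  · rw [Function.update_of_ne hik] at *
    exact hc hij hin hj

lemma PullsJustified.ne_zero [Fintype ι] (hc : PullsJustified μ a n c) (hcn : ∀ k, c k ≤ n)
    (hcard : Fintype.card ι ≤ ∑ k, c k) (i : ι) : c i ≠ 0 := by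
  intro hi
  have hle_one (k : ι) : c k ≤ 1 := by
    by_contra! hk
    exact (hc (by rintro rfl; lia) (by have := hcn k; lia) hk).1 hi
  have hlt : ∑ k, c k < ∑ _k : ι, 1 :=
    Finset.sum_lt_sum (fun k _ => hle_one k) ⟨i, Finset.mem_univ i, by lia⟩
  simp only [Finset.sum_const, Finset.card_univ, smul_eq_mul, mul_one] at hlt
  lia

lemma PullsJustified.pulls_mul_sq_le (hc : PullsJustified μ a n c) (ha : 0 ≤ a) (hij : i ≠ j)
    (hi : c i < n) (hj : c j ≠ 0) {u : ℝ} (hu : 0 ≤ u) (h : μ j + u ≤ μ i + 4 / 5 * √(a / c i)) :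
    (c j - 1) * u ^ 2 ≤ 36 / 25 * a := by
  rcases (Nat.one_le_iff_ne_zero.2 hj).eq_or_lt with hone | htwo
  · rw [← hone]
    simpa using ha
  have hpos : (0 : ℝ) < c j - 1 := sub_pos.2 (Nat.one_lt_cast.2 htwo)
  have hle : u ≤ 6 / 5 * √(a / (c j - 1)) := by linarith [(hc hij hi htwo).2]
  calc (c j - 1) * u ^ 2 ≤ (c j - 1) * (6 / 5 * √(a / (c j - 1))) ^ 2 := by gcongr
    _ = 36 / 25 * a := by
      rw [mul_pow, Real.sq_sqrt (by positivity)]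
      field_simp
      ring

section Hardness

variable [Fintype ι] [DecidableEq ι]

/-- The hardness `∑ 1 / (μ i - μ best) ^ 2` of identifying the arm `best`, usually denoted `H₁`. -/
noncomputable def hardness (μ : ι → ℝ) (best : ι) : ℝ :=
  ∑ i ∈ Finset.univ.erase best, 1 / (μ i - μ best) ^ 2

lemma le_pulls_add_pulls_mul_sq (hbest : ∀ i ≠ best, μ i < μ best)
    (hbudget : 36 / 25 * a * hardness μ best ≤ ∑ k, (c k - 1 : ℝ)) (hi : i ≠ best)
    (hother : ∀ j ≠ best, j ≠ i → (c j - 1) * (μ best - μ j) ^ 2 ≤ 36 / 25 * a) :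
    36 / 25 * a ≤ ((c best - 1) + (c i - 1)) * (μ best - μ i) ^ 2 := by
  have hgap (j : ι) (hj : j ≠ best) : 0 < (μ best - μ j) ^ 2 := pow_pos (sub_pos.2 (hbest j hj)) 2
  have hmem : i ∈ Finset.univ.erase best := by simp [hi]
  have hsum : ∑ k ∈ (Finset.univ.erase best).erase i, (c k - 1 : ℝ) ≤
      ∑ k ∈ (Finset.univ.erase best).erase i, 36 / 25 * a * (1 / (μ k - μ best) ^ 2) := by
    refine Finset.sum_le_sum fun k hk => ?_
    simp only [Finset.mem_erase, Finset.mem_univ, and_true] at hk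
    rw [mul_one_div, sub_sq_comm (μ k), le_div_iff₀ (hgap k hk.2)]
    exact hother k hk.2 hk.1
  rw [hardness, Finset.mul_sum, ← Finset.add_sum_erase _ _ hmem,
    ← Finset.add_sum_erase _ _ (Finset.mem_univ best), ← Finset.add_sum_erase _ _ hmem] at hbudget
  rw [← div_le_iff₀ (hgap i hi), ← mul_one_div, ← sub_sq_comm (μ i)]
  linarith

variable (hc : PullsJustified μ a n c) (ha : 0 < a) (hpos : ∀ k, c k ≠ 0)
  (hbest : ∀ i ≠ best, μ i < μ best)
  (hbudget : 36 / 25 * a * hardness μ best ≤ ∑ k, (c k - 1 : ℝ)) (hi : i ≠ best)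
include hc ha hpos hbest hbudget hi

/-- Otherwise the bonus of `best` is at least `5 / 6` of the gap, so `i` takes less than half of the
pulls that the budget leaves for `best` and `i`. -/
lemma PullsJustified.le_best_pulls_of_best_lt (hlt : c best < n) :
    36 / 25 * a ≤ 2 * ((c best - 1) * (μ best - μ i) ^ 2) := by
  set r := √(a / c best)
  have hgap : 0 < μ best - μ i := sub_pos.2 (hbest i hi)
  have hcb : (0 : ℝ) < c best := Nat.cast_pos.2 (Nat.pos_of_ne_zero (hpos best))
  have hr : 0 < r := by positivity
  have hrsq : c best * r ^ 2 = a := by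
    rw [Real.sq_sqrt (by positivity)]
    field_simp
  have htotal := le_pulls_add_pulls_mul_sq hbest hbudget hi fun j hj _ =>
    hc.pulls_mul_sq_le ha.le hj.symm hlt (hpos j) (sub_pos.2 (hbest j hj)).le (by linarith)
  have hrival : (c i - 1) * (μ best - μ i + 4 / 5 * r) ^ 2 ≤ 36 / 25 * a :=
    hc.pulls_mul_sq_le ha.le hi.symm hlt (hpos i) (by positivity) (by linarith)
  by_contra! hlow
  have hci : (0 : ℝ) < c i - 1 := by
    refine pos_of_mul_pos_left (?_ : 0 < (c i - 1) * (μ best - μ i) ^ 2) (by positivity)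
    linarith
  rcases (Nat.one_le_iff_ne_zero.2 (hpos best)).eq_or_lt with hone | htwo
  · have : (c i - 1) * (μ best - μ i) ^ 2 < (c i - 1) * (μ best - μ i + 4 / 5 * r) ^ 2 := by
      gcongr
      linarith
    simp only [← hone, Nat.cast_one, sub_self, zero_add] at htotal
    linarith
  · have hcb_two : (2 : ℝ) ≤ c best := by exact_mod_cast htwo
    have hr_large : 5 / 6 * (μ best - μ i) ≤ r := by
      refine le_of_sq_le_sq ?_ hr.le
      refine le_of_mul_le_mul_left ?_ hcb
      nlinarith [sq_nonneg (μ best - μ i)]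
    have : (c i - 1) * (5 / 3 * (μ best - μ i)) ^ 2 ≤
        (c i - 1) * (μ best - μ i + 4 / 5 * r) ^ 2 := by
      gcongr
      linarith
    linarith

lemma PullsJustified.le_best_pulls_of_gap_le (hlt : c i < n) (hle : n ≤ c best)
    (hgap : μ best - μ i ≤ 4 / 5 * √(a / c i)) :
    36 / 25 * a ≤ 2 * ((c best - 1) * (μ best - μ i) ^ 2) := by
  have htotal := le_pulls_add_pulls_mul_sq hbest hbudget hi fun j hj hji =>
    hc.pulls_mul_sq_le ha.le hji.symm hlt (hpos j) (sub_pos.2 (hbest j hj)).le (by linarith)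
  have hcount : (c i : ℝ) ≤ c best := by exact_mod_cast hlt.le.trans hle
  nlinarith [mul_nonneg (sub_nonneg.2 hcount) (sq_nonneg (μ best - μ i))]

lemma PullsJustified.best_radius_le (hlt : c best < n) :
    √(a / c best) ≤ 5 / 4 * (μ best - μ i) := by
  have hcb : (0 : ℝ) < c best := Nat.cast_pos.2 (Nat.pos_of_ne_zero (hpos best))
  have hgap : 0 < μ best - μ i := sub_pos.2 (hbest i hi)
  have hle := hc.le_best_pulls_of_best_lt ha hpos hbest hbudget hi hlt
  rw [Real.sqrt_le_left (by positivity), div_le_iff₀ hcb]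
  nlinarith [mul_pos hcb (pow_pos hgap 2), pow_pos hgap 2]

lemma PullsJustified.radius_le (hlt : c i < n) : √(a / c i) ≤ 25 / 8 * (μ best - μ i) := by
  have hgap : 0 < μ best - μ i := sub_pos.2 (hbest i hi)
  by_contra! hlarge
  have hle : 36 / 25 * a ≤ 2 * ((c best - 1) * (μ best - μ i) ^ 2) := by
    rcases lt_or_ge (c best) n with hlt' | hge
    · exact hc.le_best_pulls_of_best_lt ha hpos hbest hbudget hi hlt'
    · exact hc.le_best_pulls_of_gap_le ha hpos hbest hbudget hi hlt hge (by linarith)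
  have hcb : (0 : ℝ) < c best - 1 :=
    pos_of_mul_pos_left (by linarith : 0 < (c best - 1) * (μ best - μ i) ^ 2) (by positivity)
  have hbestrad : √(a / (c best - 1)) ≤ 5 / 4 * (μ best - μ i) := by
    rw [Real.sqrt_le_left (by positivity), div_le_iff₀ hcb]
    nlinarith [mul_pos hcb (pow_pos hgap 2)]
  have htwo : 2 ≤ c best := by exact_mod_cast sub_pos.1 hcb
  linarith [(hc hi hlt htwo).2]

/-- The two estimation errors add up to at most `1 / 4 + 5 / 8 < 1` of the gap. -/
theorem PullsJustified.estimate_lt_estimate_best {e : ι → ℝ}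
    (hfull : ∀ k, n ≤ c k → e k = μ k) (he : ∀ k, |e k - μ k| < √(a / c k) / 5) :
    e i < e best := by
  have hgap : 0 < μ best - μ i := sub_pos.2 (hbest i hi)
  have herr_best : μ best - e best ≤ (μ best - μ i) / 4 := by
    rcases lt_or_ge (c best) n with hlt | hge
    · have := hc.best_radius_le ha hpos hbest hbudget hi hlt
      linarith [(abs_lt.1 (he best)).1]
    · linarith [hfull best hge]
  have herr : e i - μ i ≤ 5 / 8 * (μ best - μ i) := by
    rcases lt_or_ge (c i) n with hlt | hge
    · have := hc.radius_le ha hpos hbest hbudget hi hlt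
      linarith [(abs_lt.1 (he i)).2]
    · linarith [hfull i hge]
  linarith

end Hardness

end PullCounts

section UCBRun

open MeasureTheory

variable {m n : ℕ} {S : Fin m → Fin n → ℝ} {a : ℝ} {O O' : Fin m → Fin n → Bool} {i k : Fin m}
  {j : Fin n}

/-- The mean score `μ i` of method `i` over all examples. -/
noncomputable def armMean (S : Fin m → Fin n → ℝ) (i : Fin m) : ℝ :=
  𝔼 j, S i j

/-- The set of examples on which method `i` has been evaluated. -/
def obsRow (O : Fin m → Fin n → Bool) (i : Fin m) : Finset (Fin n) :=
  {j | O i j = true}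

lemma obsCount_eq_card (O : Fin m → Fin n → Bool) (i : Fin m) :
    obsCount O i = (obsRow O i).card :=
  rfl

lemma obsCount_le (O : Fin m → Fin n → Bool) (i : Fin m) : obsCount O i ≤ n :=
  (Finset.card_le_univ _).trans_eq (Fintype.card_fin n)

lemma empMean_eq_expect (S : Fin m → Fin n → ℝ) (O : Fin m → Fin n → Bool) (i : Fin m) :
    empMean S O i = 𝔼 j ∈ obsRow O i, S i j :=
  (Finset.expect_eq_sum_div_card ..).symm

lemma empMean_eq_armMean (h : n ≤ obsCount O i) : empMean S O i = armMean S i := by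
  have hrow : obsRow O i = Finset.univ :=
    (Finset.card_eq_iff_eq_univ _).1
      (((obsCount_le O i).antisymm h).trans (Fintype.card_fin n).symm)
  rw [empMean_eq_expect, hrow, armMean]

lemma filter_eq_false_eq_compl_obsRow (O : Fin m → Fin n → Bool) (i : Fin m) :
    Finset.univ.filter (fun j => O i j = false) = (obsRow O i)ᶜ := by
  ext j
  simp [obsRow]

lemma mem_candidates_iff : i ∈ candidates O ↔ obsCount O i < n := by
  have hcompl := Finset.card_compl_lt_iff_nonempty (obsRow O i)ᶜ
  rw [compl_compl, Fintype.card_fin, ← obsCount_eq_card, ← filter_eq_false_eq_compl_obsRow,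
    Finset.filter_nonempty_iff] at hcompl
  simpa [candidates] using hcompl.symm

lemma obsRow_reveal_self : obsRow (reveal O k j) k = insert j (obsRow O k) := by
  ext j'
  by_cases h : j' = j <;> simp [obsRow, reveal, h]

lemma obsRow_reveal_of_ne (h : i ≠ k) : obsRow (reveal O k j) i = obsRow O i := by
  simp [obsRow, reveal, h]

lemma obsCount_reveal (hj : j ∉ obsRow O k) :
    obsCount (reveal O k j) = Function.update (obsCount O) k (obsCount O k + 1) := by
  ext i
  rcases eq_or_ne i k with rfl | hik
  · rw [Function.update_self, obsCount_eq_card, obsRow_reveal_self, Finset.card_insert_of_notMem hj,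
      obsCount_eq_card]
  · rw [Function.update_of_ne hik, obsCount_eq_card, obsRow_reveal_of_ne hik, obsCount_eq_card]

lemma compl_obsRow_nonempty_of_mem_bestArms (hk : k ∈ bestArms S a O) : (obsRow O k)ᶜ.Nonempty := by
  obtain ⟨j, hj⟩ := (Finset.mem_filter.1 (Finset.mem_filter.1 hk).1).2
  exact ⟨j, by simp [obsRow, hj]⟩

lemma bestArms_nonempty (h : ∑ i, obsCount O i < m * n) : (bestArms S a O).Nonempty := by
  have hcand : (candidates O).Nonempty := by
    obtain ⟨i, -, hi⟩ : ∃ i ∈ Finset.univ, obsCount O i < n :=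
      Finset.exists_lt_of_sum_lt (by simpa using h)
    exact ⟨i, mem_candidates_iff.2 hi⟩
  obtain ⟨b, hb, hmax⟩ := Finset.exists_max_image _ (ucb S a O) hcand
  exact ⟨b, Finset.mem_filter.2 ⟨hb, hmax⟩⟩

lemma exists_eq_reveal_of_mem_support_ucbeStep (h : ∑ i, obsCount O i < m * n)
    (hO' : O' ∈ (ucbeStep S a O).support) :
    ∃ k ∈ bestArms S a O, ∃ j ∉ obsRow O k, O' = reveal O k j := by
  rw [ucbeStep, dif_pos (bestArms_nonempty h), PMF.mem_support_bind_iff] at hO'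
  obtain ⟨k, hk, hO'⟩ := hO'
  rw [PMF.mem_support_uniformOfFinset_iff] at hk
  simp only [filter_eq_false_eq_compl_obsRow] at hO'
  rw [dif_pos (compl_obsRow_nonempty_of_mem_bestArms hk), PMF.mem_support_map_iff] at hO'
  obtain ⟨j, hj, rfl⟩ := hO'
  exact ⟨k, hk, j, by simpa using hj, rfl⟩

lemma sum_obsCount_of_mem_support_ucbeRun {t : ℕ} (ht : t ≤ m * n)
    (hO : O ∈ (ucbeRun S a t).support) : ∑ i, obsCount O i = t := by
  induction t generalizing O with
  | zero =>
    obtain rfl : O = fun _ _ => false := by simpa [ucbeRun] using hO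
    simp [obsCount]
  | succ t ih =>
    obtain ⟨O₀, hO₀, hO⟩ := (PMF.mem_support_bind_iff ..).1 hO
    have hsum := ih (by lia) hO₀
    obtain ⟨k, -, j, hj, rfl⟩ := exists_eq_reveal_of_mem_support_ucbeStep (by lia) hO
    rw [obsCount_reveal hj, Finset.sum_update_of_mem (Finset.mem_univ k), ← hsum,
      ← Finset.add_sum_erase _ _ (Finset.mem_univ k), Finset.sdiff_singleton_eq_erase]
    ring

lemma integral_ucbeStep_le {f : (Fin m → Fin n → Bool) → ℝ}
    (h : ∀ k ∈ bestArms S a O, 𝔼 j ∈ (obsRow O k)ᶜ, f (reveal O k j) ≤ f O) :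
    ∫ O', f O' ∂(ucbeStep S a O).toMeasure ≤ f O := by
  unfold ucbeStep
  split_ifs with hne
  · rw [integral_toMeasure_bind]
    refine integral_toMeasure_le fun k hk => ?_
    rw [PMF.mem_support_uniformOfFinset_iff] at hk
    simp only [filter_eq_false_eq_compl_obsRow]
    rw [dif_pos (compl_obsRow_nonempty_of_mem_bestArms hk), ← PMF.bind_pure_comp,
      integral_toMeasure_bind]
    simpa [PMF.toMeasure_pure, integral_toMeasure_uniformOfFinset] using h k hk
  · simp [PMF.toMeasure_pure]

/-- All empirical means are accurate up to a fifth of the exploration bonus. -/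
def Concentrated (S : Fin m → Fin n → ℝ) (a : ℝ) (O : Fin m → Fin n → Bool) : Prop :=
  ∀ i, obsCount O i ≠ 0 → |empMean S O i - armMean S i| < √(a / obsCount O i) / 5

lemma ucb_le_of_mem_bestArms (hk : k ∈ bestArms S a O) (hi : obsCount O i < n)
    (hk0 : obsCount O k ≠ 0) : obsCount O i ≠ 0 ∧
      empMean S O i + √(a / obsCount O i) ≤ empMean S O k + √(a / obsCount O k) := by
  have h := (Finset.mem_filter.1 hk).2 i (mem_candidates_iff.2 hi)
  simp only [ucb, if_neg hk0] at h
  split_ifs at h with hi0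
  · exact absurd h (EReal.coe_lt_top _).not_ge
  · exact ⟨hi0, EReal.coe_le_coe_iff.1 h⟩

lemma pullsJustified_reveal (ha : 0 ≤ a) (hO : Concentrated S a O)
    (hpulls : PullsJustified (armMean S) a n (obsCount O)) (hk : k ∈ bestArms S a O)
    (hj : j ∉ obsRow O k) : PullsJustified (armMean S) a n (obsCount (reveal O k j)) := by
  rw [obsCount_reveal hj]
  refine hpulls.update ha fun i _ hin hk0 => ?_
  obtain ⟨hi0, hle⟩ := ucb_le_of_mem_bestArms hk hin hk0
  exact ⟨hi0, by linarith [(abs_lt.1 (hO i hi0)).1, (abs_lt.1 (hO k hk0)).2]⟩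

lemma empMean_lt_empMean_of_sum_obsCount {istar : Fin m}
    (hstar : ∀ i ≠ istar, armMean S i < armMean S istar) {T : ℕ} (hTm : m ≤ T) (ha : 0 < a)
    (hbudget : 36 / 25 * a * hardness (armMean S) istar ≤ T - m) (hO : Concentrated S a O)
    (hpulls : PullsJustified (armMean S) a n (obsCount O)) (hsum : ∑ i, obsCount O i = T)
    (hi : i ≠ istar) : empMean S O i < empMean S O istar := by
  have hpos := hpulls.ne_zero (obsCount_le O) (by simpa [hsum] using hTm)
  have hpred : ∑ k, (obsCount O k - 1 : ℝ) = T - m := by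
    simp [Finset.sum_sub_distrib, ← hsum]
  exact hpulls.estimate_lt_estimate_best ha hpos hstar (hbudget.trans_eq hpred.symm) hi
    (fun _ => empMean_eq_armMean) fun k => hO k (hpos k)

/-- The sum over all methods `i` and sample sizes `s` of the conditional probability, given `O`,
that the first `s` observations of row `i` have an inaccurate mean. It bounds the probability that
`Concentrated` fails at some time up to `T`, hence the range of `s`. -/
noncomputable def deviationPotential (S : Fin m → Fin n → ℝ) (a : ℝ) (T : ℕ)
    (O : Fin m → Fin n → Bool) : ℝ :=
  ∑ i, ∑ s ∈ Finset.Icc 1 (min T n), deviationProb (S i) s (√(a / s) / 5) (obsRow O i)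

lemma deviationPotential_nonneg (S : Fin m → Fin n → ℝ) (a : ℝ) (T : ℕ)
    (O : Fin m → Fin n → Bool) : 0 ≤ deviationPotential S a T O :=
  Finset.sum_nonneg fun _ _ => Finset.sum_nonneg fun _ _ => deviationProb_nonneg ..

lemma integral_deviationPotential_le (S : Fin m → Fin n → ℝ) (a b : ℝ) (T : ℕ)
    (O : Fin m → Fin n → Bool) :
    ∫ O', deviationPotential S b T O' ∂(ucbeStep S a O).toMeasure ≤
      deviationPotential S b T O := by
  refine integral_ucbeStep_le fun k hk => ?_
  simp only [deviationPotential, Finset.expect_sum_comm]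
  refine Finset.sum_le_sum fun i _ => Finset.sum_le_sum fun s _ => ?_
  rcases eq_or_ne i k with rfl | hik
  · simpa only [obsRow_reveal_self] using expect_deviationProb_insert_le ..
  · simp only [obsRow_reveal_of_ne hik]
    rw [Finset.expect_const (compl_obsRow_nonempty_of_mem_bestArms hk)]

lemma concentrated_of_deviationPotential_lt_one {T : ℕ} (hsum : ∑ i, obsCount O i ≤ T)
    (h : deviationPotential S a T O < 1) : Concentrated S a O := by
  intro i hi
  by_contra! hdev
  rw [empMean_eq_expect] at hdev
  have hmem : obsCount O i ∈ Finset.Icc 1 (min T n) := by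
    have := Finset.single_le_sum (fun k _ => Nat.zero_le (obsCount O k)) (Finset.mem_univ i)
    have := obsCount_le O i
    simp only [Finset.mem_Icc]
    lia
  let f : Fin m → ℕ → ℝ := fun k s => deviationProb (S k) s (√(a / s) / 5) (obsRow O k)
  have hf : 0 ≤ f := fun _ _ => deviationProb_nonneg ..
  refine h.not_ge ?_
  calc 1 = f i (obsCount O i) := (deviationProb_card_eq_one hdev).symm
    _ ≤ ∑ s ∈ Finset.Icc 1 (min T n), f i s := Finset.single_le_sum (fun s _ => hf i s) hmem
    _ ≤ ∑ k, ∑ s ∈ Finset.Icc 1 (min T n), f k s :=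
        Finset.single_le_sum (f := fun k => ∑ s ∈ Finset.Icc 1 (min T n), f k s)
          (fun k _ => Finset.sum_nonneg fun s _ => hf k s) (Finset.mem_univ i)

lemma deviationPotential_empty_le (hS : ∀ i j, S i j ∈ Set.Icc (0 : ℝ) 1) (ha : 0 ≤ a) (T : ℕ) :
    deviationPotential S a T (fun _ _ => false) ≤ 2 * T * m * Real.exp (-(2 * a / 25)) := by
  have hterm (i : Fin m) : ∀ s ∈ Finset.Icc 1 (min T n),
      deviationProb (S i) s (√(a / s) / 5) ∅ ≤ 2 * Real.exp (-(2 * a / 25)) := by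
    intro s hs
    obtain ⟨hs1, hsn⟩ : 1 ≤ s ∧ s ≤ n := by
      simp only [Finset.mem_Icc] at hs
      lia
    have : NeZero n := ⟨by lia⟩
    refine (deviationProb_empty_le zero_lt_one (hS i) (by simpa using hsn)
      (by positivity)).trans_eq ?_
    have hs0 : (s : ℝ) ≠ 0 := by positivity
    rw [div_pow, Real.sq_sqrt (by positivity)]
    congr 3
    field_simp
    ring
  calc deviationPotential S a T (fun _ _ => false)
      = ∑ i, ∑ s ∈ Finset.Icc 1 (min T n), deviationProb (S i) s (√(a / s) / 5) ∅ := by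
        simp [deviationPotential, obsRow]
    _ ≤ ∑ _i : Fin m, ∑ _s ∈ Finset.Icc 1 (min T n), 2 * Real.exp (-(2 * a / 25)) :=
        Finset.sum_le_sum fun i _ => Finset.sum_le_sum (hterm i)
    _ = m * (min T n : ℕ) * (2 * Real.exp (-(2 * a / 25))) := by
        simp [mul_assoc]
    _ ≤ m * T * (2 * Real.exp (-(2 * a / 25))) := by
        gcongr
        exact min_le_left T n
    _ = 2 * T * m * Real.exp (-(2 * a / 25)) := by ring

lemma measureReal_ucbeRun_not_invariant_le (hS : ∀ i j, S i j ∈ Set.Icc (0 : ℝ) 1) (ha : 0 ≤ a)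
    {T : ℕ} (hT : T ≤ m * n) :
    (ucbeRun S a T).toMeasure.real
        {O | ¬ (Concentrated S a O ∧ PullsJustified (armMean S) a n (obsCount O))} ≤
      2 * T * m * Real.exp (-(2 * a / 25)) := by
  refine le_trans ?_ (deviationPotential_empty_le hS ha T)
  refine measureReal_not_invariant_le (κ := ucbeStep S a) rfl (fun _ => rfl)
    (deviationPotential_nonneg S a T) (integral_deviationPotential_le S a a T) ?_ ?_
  · have hzero : obsCount (fun (_ : Fin m) (_ : Fin n) => false) = 0 := by
      ext
      simp [obsCount]
    exact ⟨fun i hi => absurd (congrFun hzero i) hi, hzero ▸ pullsJustified_zero⟩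
  · rintro t ht O hO ⟨hconc, hpulls⟩ O' hO' hlt
    have hsum := sum_obsCount_of_mem_support_ucbeRun (by lia) hO
    have hsum' : ∑ i, obsCount O' i = t + 1 :=
      sum_obsCount_of_mem_support_ucbeRun (by lia) ((PMF.mem_support_bind_iff ..).2 ⟨O, hO, hO'⟩)
    obtain ⟨k, hk, j, hj, rfl⟩ := exists_eq_reveal_of_mem_support_ucbeStep (by lia) hO'
    exact ⟨concentrated_of_deviationPotential_lt_one (by lia) hlt,
      pullsJustified_reveal ha hconc hpulls hk hj⟩

theorem ucbe_success_probability_general (hS : ∀ i j, S i j ∈ Set.Icc (0 : ℝ) 1) {istar : Fin m}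
    (hstar : ∀ i ≠ istar, armMean S i < armMean S istar) {T : ℕ} (hTm : m ≤ T) (hTmn : T ≤ m * n)
    (ha : 36 / 25 * a * hardness (armMean S) istar ≤ T - m) :
    ENNReal.ofReal (1 - 2 * T * m * Real.exp (-(2 * a / 25))) ≤
      ucbeOutput istar.pos S a T istar := by
  rcases le_or_gt a 0 with hneg | hpos
  · have hm : (1 : ℝ) ≤ m := by exact_mod_cast istar.pos
    have hT : (1 : ℝ) ≤ T := hm.trans (by exact_mod_cast hTm)
    have hexp : 1 ≤ Real.exp (-(2 * a / 25)) := Real.one_le_exp (by linarith)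
    rw [ENNReal.ofReal_of_nonpos]
    · exact zero_le
    · nlinarith [one_le_mul_of_one_le_of_one_le (one_le_mul_of_one_le_of_one_le hT hm) hexp]
  let good := {O | Concentrated S a O ∧ PullsJustified (armMean S) a n (obsCount O)}
  have hmeas : MeasurableSet good := (Set.toFinite _).measurableSet
  have hgood : ENNReal.ofReal (1 - 2 * T * m * Real.exp (-(2 * a / 25))) ≤
      (ucbeRun S a T).toMeasure good := by
    have hbad : (ucbeRun S a T).toMeasure.real goodᶜ ≤ 2 * T * m * Real.exp (-(2 * a / 25)) :=
      measureReal_ucbeRun_not_invariant_le hS hpos.le hTmn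
    rw [probReal_compl_eq_one_sub hmeas] at hbad
    exact ENNReal.ofReal_le_of_le_toReal (sub_le_comm.1 hbad)
  refine hgood.trans (toMeasure_le_bind_apply hmeas fun O hO ⟨hconc, hpulls⟩ => ?_)
  refine uniformOfFinset_apply_eq_one fun i hi => ?_
  by_contra hne
  have hlt := empMean_lt_empMean_of_sum_obsCount hstar hTm hpos ha hconc hpulls
    (sum_obsCount_of_mem_support_ucbeRun hTmn hO) hne
  exact hlt.not_ge ((Finset.mem_filter.1 hi).2 istar)

end UCBRun

/-- **Lower bound on the success probability of UCB-E.**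
Let `S ∈ [0,1]^{m×n}` with `m ≥ 2`, let `μ i` be the mean score of method `i`, and suppose
`i*` is the unique best method.  With `H₁ = ∑_{i ≠ i*} 1/(μ i - μ i*)²`, budget
`m ≤ T ≤ m n`, and exploration parameter `a = (25/36) (T - m)/H₁`, the UCB-E algorithm
returns `i*` with probability at least `1 - 2 T m exp(-(T - m)/(18 H₁))`. -/
theorem ucbe_success_probability
    (m n : ℕ) (hm : 2 ≤ m) (hn : 0 < n)
    (S : Fin m → Fin n → ℝ) (hS : ∀ i j, S i j ∈ Set.Icc (0 : ℝ) 1)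
    (μ : Fin m → ℝ) (hμ : ∀ i, μ i = (∑ j, S i j) / n)
    (istar : Fin m) (hstar : ∀ i, i ≠ istar → μ i < μ istar)
    (H1 : ℝ) (hH1 : H1 = ∑ i ∈ Finset.univ.erase istar, 1 / (μ i - μ istar) ^ 2)
    (T : ℕ) (hTm : m ≤ T) (hTmn : T ≤ m * n)
    (a : ℝ) (ha : a = 25 / 36 * (((T : ℝ) - m) / H1)) :
    ENNReal.ofReal (1 - 2 * T * m * Real.exp (-(((T : ℝ) - m) / (18 * H1)))) ≤
      ucbeOutput (by omega) S a T istar := by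
  obtain rfl : μ = armMean S := funext fun i => by
    rw [hμ, armMean, Fintype.expect_eq_sum_div_card, Fintype.card_fin]
  obtain rfl : H1 = hardness (armMean S) istar := hH1
  set H1 := hardness (armMean S) istar
  have hexp : 2 * a / 25 = (T - m) / (18 * H1) := by
    rw [ha]
    ring
  have hT : (0 : ℝ) ≤ T - m := sub_nonneg.2 (by exact_mod_cast hTm)
  have hbudget : 36 / 25 * a * H1 ≤ T - m := calc
    36 / 25 * a * H1 = (T - m) * (H1 / H1) := by
      rw [ha]
      ring
    _ ≤ T - m := mul_le_of_le_one_right hT (div_self_le_one H1)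
  exact hexp ▸ ucbe_success_probability_general hS hstar hTm hTmn hbudget
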